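/- There exist a nonempty compact Hausdorff connected topological space K that is an F-space (i.e., any two disjoint open F_σ subsets of K have disjoint closures) and a continuous function f : K → ℝ such that the set Ω_f = ⋃_{x ∈ ℝ} Int(f⁻¹({x})) is not dense in K. -/

import Mathlib

open Set Topology

noncomputable section

/-- A set is an `Fσ` set if it is a countable union of closed sets. -/
def IsFSigma {X : Type*} [TopologicalSpace X] (s : Set X) : Prop :=
  ∃ F : ℕ → Set X, (∀ n, IsClosed (F n)) ∧ s = ⋃ n, F n

/-- A topological space is an `F`-space if any two disjoint open `Fσ` subsets
have disjoint closures. -/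
def IsFSpace (X : Type*) [TopologicalSpace X] : Prop :=
  ∀ s t : Set X, IsOpen s → IsOpen t → IsFSigma s → IsFSigma t → Disjoint s t →
    Disjoint (closure s) (closure t)
open Filter

theorem cover_aux {Y : Type*} [TopologicalSpace Y] [NormalSpace Y] {K : Set Y} (hK : IsClosed K)
    {s t : Set K} (hs : IsOpen s) (hsF : IsFSigma s) (hd : Disjoint s t) :
    HasSeparatingCover (Subtype.val '' s) (Subtype.val '' t) := by
  obtain ⟨F, hF, rfl⟩ := hsF
  obtain ⟨O, hO, hOs⟩ := isOpen_induced_iff.1 hs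
  have h1 : Disjoint O (closure (Subtype.val '' t)) := by
    refine Disjoint.closure_right ?_ hO
    rw [Set.disjoint_left]
    rintro _ hx ⟨y, hy, rfl⟩
    have : y ∈ Subtype.val ⁻¹' O := hx
    rw [hOs] at this
    exact Set.disjoint_left.1 hd this hy
  have h2 : ∀ n, Subtype.val '' F n ⊆ (closure (Subtype.val '' t))ᶜ := by
    rintro n _ ⟨y, hy, rfl⟩
    have : y ∈ Subtype.val ⁻¹' O := by
      rw [hOs]; exact mem_iUnion.2 ⟨n, hy⟩
    exact Set.disjoint_left.1 h1 this
  have h3 : ∀ n, ∃ u, IsOpen u ∧ Subtype.val '' F n ⊆ u ∧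
      closure u ⊆ (closure (Subtype.val '' t))ᶜ := fun n =>
    normal_exists_closure_subset (hK.isClosedEmbedding_subtypeVal.isClosedMap _ (hF n))
      isClosed_closure.isOpen_compl (h2 n)
  choose u hu1 hu2 hu3 using h3
  refine ⟨u, ?_, fun n => ⟨hu1 n, ?_⟩⟩
  · rw [image_iUnion]
    exact iUnion_mono hu2
  · rw [Set.disjoint_left]
    intro x hx hxt
    exact hu3 n hx (subset_closure hxt)

theorem closed_aux {X : Type*} [TopologicalSpace X] (C : CompactExhaustion X)
    (D : ℕ → Set X) (hD : ∀ n, IsClosed (D n)) : IsClosed (⋃ n, D n \ interior (C n)) := by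
  refine LocallyFinite.isClosed_iUnion ?_ (fun n => (hD n).sdiff isOpen_interior)
  intro x
  obtain ⟨m, hm⟩ := C.exists_mem x
  refine ⟨interior (C (m+1)), isOpen_interior.mem_nhds (C.subset_interior_succ m hm), ?_⟩
  refine (Set.finite_lt_nat (m+1)).subset ?_
  rintro n ⟨y, hy, hy2⟩
  by_contra hn
  have : m + 1 ≤ n := not_lt.1 hn
  exact hy.2 (interior_mono (C.subset this) hy2)

/-- eventual equality transfers to extension -/
theorem ext_aux {X : Type*} [TopologicalSpace X] {Z : Type*} [TopologicalSpace Z]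
    {g : StoneCech X → Z} (hg : Continuous g) {S : Set Z} (hS : IsClosed S)
    {U : Set (StoneCech X)} (hU : IsOpen U)
    (h : ∀ x, stoneCechUnit x ∈ U → g (stoneCechUnit x) ∈ S) : ∀ p ∈ U, g p ∈ S := by
  intro p hp
  have h1 : p ∈ closure (U ∩ range stoneCechUnit) :=
    denseRange_stoneCechUnit.open_subset_closure_inter hU hp
  have h2 : closure (U ∩ range stoneCechUnit) ⊆ g ⁻¹' S := by
    refine closure_minimal ?_ (hS.preimage hg)
    rintro _ ⟨hx, x, rfl⟩
    exact h x hx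
  exact h2 h1

theorem fspace_of_remainder {X : Type*} [TopologicalSpace X] [T2Space X]
    [WeaklyLocallyCompactSpace X]
    [SigmaCompactSpace X] [NormalSpace X] (K : Set (StoneCech X)) (hK : IsClosed K)
    (hd : ∀ x, stoneCechUnit x ∉ K) : IsFSpace K := by
  intro s t hs ht hsF htF hst
  obtain ⟨U, V, hU, hV, hsU, htV, hUV⟩ := hasSeparatingCovers_iff_separatedNhds.1
    ⟨cover_aux hK hs hsF hst, cover_aux hK ht htF hst.symm⟩
  obtain ⟨F, hF, rfl⟩ := hsF
  obtain ⟨G, hG, rfl⟩ := htF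
  have hcl : ∀ {F : Set K}, IsClosed F → IsClosed (Subtype.val '' F) := fun h =>
    hK.isClosedEmbedding_subtypeVal.isClosedMap _ h
  have hA : ∀ n, ∃ u, IsOpen u ∧ Subtype.val '' F n ⊆ u ∧ closure u ⊆ U := fun n =>
    normal_exists_closure_subset (hcl (hF n)) hU
      ((image_mono (subset_iUnion F n)).trans hsU)
  have hB : ∀ n, ∃ u, IsOpen u ∧ Subtype.val '' G n ⊆ u ∧ closure u ⊆ V := fun n =>
    normal_exists_closure_subset (hcl (hG n)) hV
      ((image_mono (subset_iUnion G n)).trans htV)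
  choose u hu1 hu2 hu3 using hA
  choose v hv1 hv2 hv3 using hB
  let C := CompactExhaustion.choice X
  have hP := closed_aux C (fun n => stoneCechUnit ⁻¹' closure (u n))
    (fun n => isClosed_closure.preimage continuous_stoneCechUnit)
  have hQ := closed_aux C (fun n => stoneCechUnit ⁻¹' closure (v n))
    (fun n => isClosed_closure.preimage continuous_stoneCechUnit)
  obtain ⟨f, hf0, hf1, hf⟩ := exists_continuous_zero_one_of_isClosed hP hQ (by
    rw [Set.disjoint_left]
    intro x hx hx'
    obtain ⟨n, hn⟩ := mem_iUnion.1 hx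
    obtain ⟨m, hm⟩ := mem_iUnion.1 hx'
    exact Set.disjoint_left.1 hUV (hu3 n hn.1) (hv3 m hm.1))
  have hfc : Continuous (fun x => (⟨f x, hf x⟩ : Icc (0:ℝ) 1)) :=
    (map_continuous f).subtype_mk _
  let g : StoneCech X → Icc (0:ℝ) 1 := stoneCechExtend hfc
  have hg : Continuous g := continuous_stoneCechExtend hfc
  have hgx : ∀ x, g (stoneCechUnit x) = ⟨f x, hf x⟩ := fun x => stoneCechExtend_stoneCechUnit hfc x
  have key : ∀ (F : ℕ → Set K) (u : ℕ → Set (StoneCech X)) (z : Icc (0:ℝ) 1),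
      (∀ n, IsOpen (u n)) → (∀ n, Subtype.val '' F n ⊆ u n) →
      (∀ x ∈ ⋃ n, stoneCechUnit ⁻¹' closure (u n) \ interior (C n), f x = z) →
      closure (⋃ n, F n) ⊆ {k : K | g k = z} := by
    intro F u z hu hFu hfz
    refine closure_minimal ?_ (isClosed_singleton.preimage (hg.comp continuous_subtype_val))
    intro k hk
    obtain ⟨n, hn⟩ := mem_iUnion.1 hk
    have hc : IsClosed (stoneCechUnit '' (C n)) :=
      ((C.isCompact n).image continuous_stoneCechUnit).isClosed
    refine ext_aux hg (isClosed_singleton (x := z)) ((hu n).sdiff hc) ?_ k ⟨hFu n ⟨k, hn, rfl⟩, ?_⟩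
    · rintro x ⟨hx1, hx2⟩
      rw [mem_singleton_iff, hgx]
      apply Subtype.ext
      refine hfz x (mem_iUnion.2 ⟨n, subset_closure hx1, fun h => hx2 ⟨x, interior_subset h, rfl⟩⟩)
    · rintro ⟨x, -, hx⟩
      exact hd x (hx ▸ k.2)
  have k1 := key F u 0 hu1 hu2 (fun x hx => hf0 hx)
  have k2 := key G v 1 hv1 hv2 (fun x hx => hf1 hx)
  rw [Set.disjoint_left]
  intro k hk hk'
  have := (k1 hk).symm.trans (k2 hk')
  exact zero_ne_one this

abbrev StripX : Type := ℝ × Icc (0:ℝ) 1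

theorem prj_cont0 : Continuous (fun x : StripX => stoneCechUnit x.1) :=
  continuous_stoneCechUnit.comp continuous_fst

def prj : StoneCech StripX → StoneCech ℝ := stoneCechExtend prj_cont0

theorem prj_cont : Continuous prj := continuous_stoneCechExtend prj_cont0

theorem prj_unit (x : ℝ) (y : Icc (0:ℝ) 1) : prj (stoneCechUnit (x, y)) = stoneCechUnit x :=
  stoneCechExtend_stoneCechUnit prj_cont0 (x, y)

theorem sct_cont0 (y : Icc (0:ℝ) 1) :
    Continuous (fun x : ℝ => stoneCechUnit ((x, y) : StripX)) :=
  continuous_stoneCechUnit.comp (by fun_prop)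

def sct (y : Icc (0:ℝ) 1) : StoneCech ℝ → StoneCech StripX := stoneCechExtend (sct_cont0 y)

theorem sct_cont (y) : Continuous (sct y) := continuous_stoneCechExtend (sct_cont0 y)

theorem sct_unit (x : ℝ) (y : Icc (0:ℝ) 1) : sct y (stoneCechUnit x) = stoneCechUnit (x, y) :=
  stoneCechExtend_stoneCechUnit (sct_cont0 y) x

theorem prj_sct (y) (e) : prj (sct y e) = e := by
  have : prj ∘ sct y = id := by
    apply stoneCech_hom_ext (prj_cont.comp (sct_cont y)) continuous_id
    ext x
    simp [sct_unit, prj_unit]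
  exact congrFun this e

theorem snd_cont0 : Continuous (fun x : StripX => x.2) := continuous_snd

def ht : StoneCech StripX → Icc (0:ℝ) 1 := stoneCechExtend snd_cont0

theorem ht_cont : Continuous ht := continuous_stoneCechExtend snd_cont0

theorem ht_sct (y e) : ht (sct y e) = y := by
  have : ht ∘ sct y = fun _ => y := by
    apply stoneCech_hom_ext (ht_cont.comp (sct_cont y)) continuous_const
    ext x
    simp [sct_unit, ht, stoneCechExtend_stoneCechUnit]
  exact congrFun this e

theorem prj_open : IsOpenMap prj := by
  rw [isOpenMap_iff_nhds_le]
  intro p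
  rw [le_map_iff]
  intro W0 hW0
  obtain ⟨W, hWW, hW, hp⟩ := mem_nhds_iff.1 hW0
  obtain ⟨g, hg0, hg1, hg⟩ := exists_continuous_zero_one_of_isClosed hW.isClosed_compl
    (isClosed_singleton (x := p)) (by simpa using hp)
  have hgc : Continuous g := map_continuous g
  let φ : ℝ → Icc (0:ℝ) 1 → ℝ := fun x y => g (stoneCechUnit (x, y))
  have hφ : Continuous ↿φ := hgc.comp (continuous_stoneCechUnit.comp (by fun_prop))
  let h : ℝ → ℝ := fun x => sSup (φ x '' univ)
  have hh : Continuous h := isCompact_univ.continuous_sSup hφ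
  have hbd : ∀ x, BddAbove (φ x '' univ) := fun x => ⟨1, by
    rintro _ ⟨y, -, rfl⟩; exact (hg _).2⟩
  have hle : ∀ x y, φ x y ≤ h x := fun x y => le_csSup (hbd x) ⟨y, trivial, rfl⟩
  have hne : ∀ x, (φ x '' univ).Nonempty := fun x => ⟨φ x 0, 0, trivial, rfl⟩
  have h01 : ∀ x, h x ∈ Icc (0:ℝ) 1 := fun x =>
    ⟨(hg _).1.trans (hle x 0), csSup_le (hne x) (by rintro _ ⟨y, -, rfl⟩; exact (hg _).2)⟩
  have hhc : Continuous (fun x => (⟨h x, h01 x⟩ : Icc (0:ℝ) 1)) := hh.subtype_mk _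
  let H : StoneCech ℝ → ℝ := fun e => (stoneCechExtend hhc e : Icc (0:ℝ) 1)
  have hH : Continuous H := continuous_subtype_val.comp (continuous_stoneCechExtend hhc)
  have hHx : ∀ x, H (stoneCechUnit x) = h x := fun x => by
    simp only [H, stoneCechExtend_stoneCechUnit]
  have h1 : ∀ q, g q ≤ H (prj q) := by
    intro q
    refine isClosed_property denseRange_stoneCechUnit (p := fun q => g q ≤ H (prj q))
      (isClosed_le hgc (hH.comp prj_cont)) ?_ q
    rintro ⟨x, y⟩
    rw [prj_unit, hHx]
    exact hle x y
  have hN : IsOpen {e | 1/2 < H e} := isOpen_lt continuous_const hH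
  have hpN : prj p ∈ {e | 1/2 < H e} := by
    have := h1 p
    rw [hg1 rfl] at this
    simp only [Pi.one_apply, mem_ofPred_eq] at this ⊢
    linarith
  refine mem_of_superset (hN.mem_nhds hpN) ?_
  have hS : IsClosed (prj '' {q | 1/2 ≤ g q}) :=
    (((isClosed_le continuous_const hgc).isCompact).image prj_cont).isClosed
  intro e he
  have h2 := ext_aux (g := id) continuous_id hS hN (by
    intro x hx
    simp only [mem_ofPred_eq, hHx] at hx
    obtain ⟨_, ⟨y, -, rfl⟩, hy⟩ := exists_lt_of_lt_csSup (hne x) hx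
    exact ⟨stoneCechUnit (x, y), le_of_lt hy, prj_unit x y⟩) e he
  obtain ⟨q, hq, hqe⟩ := h2
  refine ⟨q, hWW ?_, hqe⟩
  by_contra hqW
  have := hg0 hqW
  simp only [mem_ofPred_eq, Pi.zero_apply] at hq this
  linarith

theorem prj_fiber (e : StoneCech ℝ) : IsPreconnected (prj ⁻¹' {e}) := by
  have key : ∀ P Q : Set (StoneCech StripX), IsClosed P → IsClosed Q → prj ⁻¹' {e} ⊆ P ∪ Q →
      Disjoint P Q → sct 0 e ∈ P → prj ⁻¹' {e} ⊆ P := by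
    intro P Q hP hQ hPQ hd hs
    obtain ⟨g, hg0, hg1, hg⟩ := exists_continuous_zero_one_of_isClosed hP hQ hd
    have hgc : Continuous g := map_continuous g
    have hT : IsClosed (prj '' {q | 1/2 = g q}) :=
      (((isClosed_eq continuous_const hgc).isCompact).image prj_cont).isClosed
    have hN : IsOpen ((prj '' {q | 1/2 = g q})ᶜ ∩ {e | g (sct 0 e) < 1/2}) :=
      hT.isOpen_compl.inter (isOpen_lt (hgc.comp (sct_cont 0)) continuous_const)
    have heN : e ∈ ((prj '' {q | 1/2 = g q})ᶜ ∩ {e | g (sct 0 e) < 1/2}) := by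
      constructor
      · rintro ⟨q, hq, hqe⟩
        have hq : 1/2 = g q := hq
        rcases hPQ hqe with h | h
        · rw [hg0 h] at hq; norm_num at hq
        · rw [hg1 h] at hq; norm_num at hq
      · have := hg0 hs
        simp only [mem_ofPred_eq, this]; norm_num
    have h1 := ext_aux hgc (isClosed_Iic (a := (1/2 : ℝ))) (hN.preimage prj_cont) (by
      rintro ⟨x, y⟩ hx
      rw [mem_preimage, prj_unit] at hx
      by_contra hgt
      have hgt : 1/2 < g (stoneCechUnit (x, y)) := not_le.1 hgt
      have hlt : g (stoneCechUnit (x, 0)) < 1/2 := by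
        have := hx.2; rwa [mem_ofPred_eq, sct_unit] at this
      have hc : Continuous (fun y : Icc (0:ℝ) 1 => g (stoneCechUnit ((x, y) : StripX))) :=
        hgc.comp (continuous_stoneCechUnit.comp (by fun_prop))
      obtain ⟨z, hz⟩ := mem_range_of_exists_le_of_exists_ge hc ⟨0, hlt.le⟩ ⟨y, hgt.le⟩
      exact hx.1 ⟨stoneCechUnit (x, z), hz.symm, prj_unit x z⟩)
    intro q hq
    rcases hPQ hq with h | h
    · exact h
    · have h2 := h1 q (by rw [mem_preimage, show prj q = e from hq]; exact heN)
      rw [mem_Iic, hg1 h] at h2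
      norm_num at h2
  rw [isPreconnected_iff_subset_of_fully_disjoint_closed (isClosed_singleton.preimage prj_cont)]
  intro P Q hP hQ hPQ hd
  rcases hPQ (show sct 0 e ∈ _ from prj_sct 0 e) with h | h
  · exact Or.inl (key P Q hP hQ hPQ hd h)
  · exact Or.inr (key Q P hQ hP (by rwa [union_comm]) hd.symm h)

/-- The positive end of the line. -/
def endH : Set (StoneCech ℝ) := ⋂ n : ℕ, closure (stoneCechUnit '' Ici (n:ℝ))

theorem endH_closed : IsClosed endH := isClosed_iInter fun _ => isClosed_closure

theorem endH_preconn : IsPreconnected endH := by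
  rw [isPreconnected_iff_subset_of_fully_disjoint_closed endH_closed]
  intro P Q hP hQ hPQ hd
  obtain ⟨U, V, hU, hV, hPU, hQV, hUV⟩ := normal_separation hP hQ hd
  obtain ⟨n, hn⟩ := exists_subset_nhds_of_isCompact
    (V := fun n : ℕ => closure (stoneCechUnit '' Ici (n:ℝ))) (U := U ∪ V)
    (Antitone.directed_ge (by
      intro m n hmn
      exact closure_mono (image_mono (Ici_subset_Ici.2 (by exact_mod_cast hmn)))))
    (fun n => isClosed_closure.isCompact)
    (fun x hx => (hU.union hV).mem_nhds (union_subset_union hPU hQV (hPQ hx)))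
  have hc : IsPreconnected (closure (stoneCechUnit '' Ici (n:ℝ))) :=
    (isPreconnected_Ici.image _ continuous_stoneCechUnit.continuousOn).closure
  have hsub : endH ⊆ closure (stoneCechUnit '' Ici (n:ℝ)) := iInter_subset _ n
  rcases hc.subset_or_subset hU hV hUV hn with h | h
  · left
    intro x hx
    rcases hPQ hx with h' | h'
    · exact h'
    · exact (Set.disjoint_left.1 hUV (h (hsub hx)) (hQV h')).elim
  · right
    intro x hx
    rcases hPQ hx with h' | h'
    · exact (Set.disjoint_left.1 hUV (hPU h') (h (hsub hx))).elim
    · exact h'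

theorem unit_notMem_endH (x : ℝ) : stoneCechUnit x ∉ endH := by
  intro hx
  obtain ⟨n, hn⟩ := exists_nat_gt (x + 1)
  have hx := mem_iInter.1 hx n
  have hc : Continuous (fun t : ℝ => projIcc (0:ℝ) 1 zero_le_one (t - x)) :=
    continuous_projIcc.comp (by fun_prop)
  have hsub : closure (stoneCechUnit '' Ici (n:ℝ)) ⊆ stoneCechExtend hc ⁻¹' {1} := by
    refine closure_minimal ?_ (isClosed_singleton.preimage (continuous_stoneCechExtend hc))
    rintro _ ⟨t, ht, rfl⟩
    rw [mem_preimage, stoneCechExtend_stoneCechUnit, mem_singleton_iff]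
    exact projIcc_of_right_le _ (by have : (n:ℝ) ≤ t := ht; linarith)
  have := hsub hx
  rw [mem_preimage, stoneCechExtend_stoneCechUnit, mem_singleton_iff, sub_self, projIcc_left] at this
  have := congrArg Subtype.val this
  norm_num at this

theorem sin_cont0 : Continuous (fun t : ℝ => (⟨Real.sin t, Real.sin_mem_Icc t⟩ : Icc (-1:ℝ) 1)) :=
  Real.continuous_sin.subtype_mk _

def bsin : StoneCech ℝ → Icc (-1:ℝ) 1 := stoneCechExtend sin_cont0

theorem bsin_cont : Continuous bsin := continuous_stoneCechExtend sin_cont0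

theorem bsin_surj : Function.Surjective (fun e : endH => bsin e) := by
  rintro ⟨c, hc⟩
  let u : ℕ → ℝ := fun k => Real.arcsin c + k * (2 * Real.pi)
  have hu : Tendsto u atTop atTop :=
    tendsto_atTop_add_const_left _ _
      (tendsto_natCast_atTop_atTop.atTop_mul_const (by positivity))
  obtain ⟨p, hp⟩ := exists_clusterPt_of_compactSpace (map (fun k => stoneCechUnit (u k)) atTop)
  have hcl : ∀ S : Set (StoneCech ℝ), IsClosed S → (∀ᶠ k in atTop, stoneCechUnit (u k) ∈ S) →
      p ∈ S := fun S hS h => by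
    have hp' : MapClusterPt p atTop (fun k => stoneCechUnit (u k)) := hp
    exact hS.mem_of_mapClusterPt hp' h
  refine ⟨⟨p, mem_iInter.2 fun n => hcl _ isClosed_closure ?_⟩, ?_⟩
  · filter_upwards [hu.eventually_ge_atTop (n:ℝ)] with k hk
    exact subset_closure ⟨_, hk, rfl⟩
  · refine hcl (bsin ⁻¹' {⟨c, hc⟩}) (isClosed_singleton.preimage bsin_cont) (Eventually.of_forall ?_)
    intro k
    simp only [bsin, mem_preimage, stoneCechExtend_stoneCechUnit, mem_singleton_iff]
    apply Subtype.ext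
    simp only [u, Real.sin_add_nat_mul_two_pi]
    exact Real.sin_arcsin hc.1 hc.2

/-- irreducible closed subset -/
theorem exists_E : ∃ E : Set (StoneCech ℝ), IsClosed E ∧ E ⊆ endH ∧ E.Nonempty ∧
    ∀ O : Set (StoneCech ℝ), IsOpen O → (O ∩ E).Nonempty → ∀ c, ¬ (∀ e ∈ O ∩ E, bsin e = c) := by
  have : CompactSpace endH := isCompact_iff_compactSpace.1 endH_closed.isCompact
  obtain ⟨E, hE, honto, hmin⟩ := exists_compact_surjective_zorn_subset
    (bsin_cont.comp continuous_subtype_val) bsin_surj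
  have hEc : IsCompact E := isCompact_iff_compactSpace.2 hE
  refine ⟨Subtype.val '' E, (hEc.image continuous_subtype_val).isClosed, ?_, ?_, ?_⟩
  · rintro _ ⟨x, -, rfl⟩; exact x.2
  · obtain ⟨x, hx, -⟩ : (0 : ℝ) ∈ Subtype.val '' ((fun e : endH => bsin e) '' E) := by
      erw [honto]; exact ⟨⟨0, by norm_num⟩, trivial, rfl⟩
    obtain ⟨y, hy, -⟩ := hx
    exact ⟨y, y, hy, rfl⟩
  · rintro O hO ⟨_, hx0, x, hx, rfl⟩ c hcon
    let E0 : Set E := {e | (e : endH).1 ∉ O}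
    have hE0 : IsClosed E0 := (hO.preimage
      (continuous_subtype_val.comp continuous_subtype_val)).isClosed_compl
    refine hmin E0 ?_ hE0 ?_
    · intro h
      have : (⟨x, hx⟩ : E) ∈ E0 := h ▸ trivial
      exact this hx0
    · set F := E.domRestrict (bsin ∘ Subtype.val) '' E0 with hF
      have hFc : IsClosed F := (hE0.isCompact.image
        ((bsin_cont.comp continuous_subtype_val).comp continuous_subtype_val)).isClosed
      have hsub : {c}ᶜ ⊆ F := by
        intro d hd
        have : d ∈ (bsin ∘ Subtype.val) '' E := by rw [honto]; trivial
        obtain ⟨y, hy, hyd⟩ := this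
        refine ⟨⟨y, hy⟩, ?_, hyd⟩
        intro hyO
        exact hd (hyd.symm.trans (hcon y ⟨hyO, y, hy, rfl⟩))
      have hdense : Dense ({c}ᶜ : Set (Icc (-1:ℝ) 1)) := by
        have : Nontrivial (Icc (-1:ℝ) 1) :=
          ⟨⟨-1, by norm_num⟩, ⟨1, by norm_num⟩, fun h => by
            have := congrArg Subtype.val h
            norm_num at this⟩
        have : ConnectedSpace (Icc (-1:ℝ) 1) :=
          isConnected_iff_connectedSpace.1 (isConnected_Icc (by norm_num))
        exact dense_compl_singleton c
      exact univ_subset_iff.1 (hdense.closure_eq ▸ closure_minimal hsub hFc)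

theorem connected_F_space_with_nondense_Omega :
    ∃ (K : Type) (_ : TopologicalSpace K), Nonempty K ∧ CompactSpace K ∧ T2Space K ∧
      ConnectedSpace K ∧ IsFSpace K ∧
      ∃ f : K → ℝ, Continuous f ∧ ¬ Dense (⋃ x : ℝ, interior (f ⁻¹' {x})) := by
  obtain ⟨E, hEc, hEH, ⟨e0, he0⟩, hE⟩ := exists_E
  let K : Set (StoneCech StripX) := prj ⁻¹' E ∪ sct 0 '' endH
  have hB : IsClosed (sct 0 '' endH) := (endH_closed.isCompact.image (sct_cont 0)).isClosed
  have hK : IsClosed K := (hEc.preimage prj_cont).union hB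
  have hKH : K ⊆ prj ⁻¹' endH := by
    rintro p (hp | ⟨e, he, rfl⟩)
    · exact hEH hp
    · rw [mem_preimage, prj_sct]; exact he
  have hs : ∀ e ∈ endH, sct 0 e ∈ K := fun e he => Or.inr ⟨e, he, rfl⟩
  have hconn : IsPreconnected K := by
    refine isPreconnected_of_forall (sct 0 e0) ?_
    have hBc : IsPreconnected (sct 0 '' endH) :=
      endH_preconn.image _ (sct_cont 0).continuousOn
    rintro p (hp | hp)
    · refine ⟨prj ⁻¹' {prj p} ∪ sct 0 '' endH, ?_, Or.inr ⟨e0, hEH he0, rfl⟩, Or.inl rfl, ?_⟩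
      · refine union_subset_union_left _ ?_
        intro q hq
        rw [mem_preimage, show prj q = prj p from hq]; exact hp
      · exact (prj_fiber (prj p)).union (sct 0 (prj p)) (prj_sct 0 _) ⟨_, hEH hp, rfl⟩ hBc
    · exact ⟨sct 0 '' endH, subset_union_right, ⟨e0, hEH he0, rfl⟩, hp, hBc⟩
  have hne : K.Nonempty := ⟨_, hs e0 (hEH he0)⟩
  refine ⟨K, inferInstance, hne.to_subtype, isCompact_iff_compactSpace.1 hK.isCompact,
    inferInstance, isConnected_iff_connectedSpace.1 ⟨hne, hconn⟩,
    fspace_of_remainder K hK ?_, fun k => (bsin (prj k) : ℝ), ?_, ?_⟩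
  · rintro ⟨x, y⟩ hx
    have := hKH hx
    rw [mem_preimage, prj_unit] at this
    exact unit_notMem_endH x this
  · exact continuous_subtype_val.comp (bsin_cont.comp (prj_cont.comp continuous_subtype_val))
  · intro hdense
    have hOo : IsOpen {q : StoneCech StripX | ht q ≠ 0} :=
      (isClosed_singleton.preimage ht_cont).isOpen_compl
    have hmem : sct 1 e0 ∈ K := Or.inl (by rw [mem_preimage, prj_sct]; exact he0)
    obtain ⟨k, hk0, hk⟩ := hdense.inter_open_nonempty (Subtype.val ⁻¹' {q | ht q ≠ 0})
      (hOo.preimage continuous_subtype_val)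
      ⟨⟨sct 1 e0, hmem⟩, by simp [ht_sct]⟩
    obtain ⟨c, hc⟩ := mem_iUnion.1 hk
    obtain ⟨W, hW, hWeq⟩ := isOpen_induced_iff.1
      (isOpen_interior (s := (fun k : K => (bsin (prj k) : ℝ)) ⁻¹' {c}))
    have hkW : k.1 ∈ W := by
      have : k ∈ Subtype.val ⁻¹' W := by rw [hWeq]; exact hc
      exact this
    have hkE : prj k.1 ∈ E := by
      rcases k.2 with h | ⟨e, -, he⟩
      · exact h
      · exact (hk0 (by rw [← he, ht_sct])).elim
    refine hE (prj '' W) (prj_open W hW) ⟨prj k.1, ⟨k.1, hkW, rfl⟩, hkE⟩ (bsin (prj k.1)) ?_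
    have hval : ∀ q (hq : q ∈ K), q ∈ W → (bsin (prj q) : ℝ) = c := by
      intro q hq hqW
      have : (⟨q, hq⟩ : K) ∈ Subtype.val ⁻¹' W := hqW
      rw [hWeq] at this
      have h2 := interior_subset this
      exact h2
    rintro _ ⟨⟨q, hqW, rfl⟩, hqE⟩
    apply Subtype.ext
    rw [hval q (Or.inl hqE) hqW, hval k.1 k.2 hkW]

end
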